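/- Let a > m. Define pathwise τ̲_a := inf{t ∈ [0,T] : M_t ≥ a} ∧ T and τ̄_a := inf{t ∈ [0,T] : M_t > a} ∧ T (inf ∅ := +∞). Then for every t ∈ [0,T], M_{t ∧ τ̲_a} = M_{t ∧ τ̄_a} P-almost surely. -/

import Mathlib

open MeasureTheory Set

open Filter Topology in
lemma aux_tendsto {Ω : Type*} {mΩ : MeasurableSpace Ω} {P : Measure Ω}
    (f : Ω → ℝ) (hf : Integrable f P) (S : ℕ → Set Ω) (S' : Set Ω)
    (hS : ∀ n, MeasurableSet (S n)) (hS' : MeasurableSet S')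
    (h : ∀ᵐ ω ∂P, ∀ᶠ n in atTop, (ω ∈ S n ↔ ω ∈ S')) :
    Tendsto (fun n => ∫ ω in S n, f ω ∂P) atTop (𝓝 (∫ ω in S', f ω ∂P)) := by
  simp_rw [← integral_indicator (hS _), ← integral_indicator hS']
  refine tendsto_integral_of_dominated_convergence (fun ω => ‖f ω‖)
    (fun n => (hf.indicator (hS n)).aestronglyMeasurable) hf.norm
    (fun n => Eventually.of_forall fun ω => norm_indicator_le_norm_self _ _) ?_
  filter_upwards [h] with ω hω
  apply tendsto_const_nhds.congr'
  filter_upwards [hω] with n hn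
  by_cases h' : ω ∈ S'
  · rw [indicator_of_mem h', indicator_of_mem (hn.2 h')]
  · rw [indicator_of_notMem h', indicator_of_notMem (fun h => h' (hn.1 h))]

/-- value at hitting time -/
lemma aux_hit (T a : ℝ) (g : ℝ → ℝ) (hg : ContinuousOn g (Icc 0 T)) (h0 : g 0 < a)
    (H : Set ℝ) (hH : H ⊆ {s ∈ Icc (0:ℝ) T | a ≤ g s}) (hH' : {s ∈ Icc (0:ℝ) T | a < g s} ⊆ H)
    (s : ℝ) (hs : s ∈ H) : g (sInf (H ∪ {T})) = a ∧ sInf (H ∪ {T}) ≤ s := by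
  have hbdd : BddBelow H := ⟨0, fun x hx => (hH hx).1.1⟩
  have hle : sInf H ≤ s := csInf_le hbdd hs
  have hsT : s ≤ T := (hH hs).1.2
  have e : sInf (H ∪ {T}) = sInf H := by
    rw [csInf_union hbdd ⟨s, hs⟩ (bddBelow_singleton) (singleton_nonempty T), csInf_singleton]
    exact inf_of_le_left (hle.trans hsT)
  rw [e]
  refine ⟨?_, hle⟩
  have hcl : IsClosed {s ∈ Icc (0:ℝ) T | a ≤ g s} :=
    hg.preimage_isClosed_of_isClosed isClosed_Icc isClosed_Ici
  have hmem : sInf H ∈ {s ∈ Icc (0:ℝ) T | a ≤ g s} :=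
    closure_minimal hH hcl (csInf_mem_closure ⟨s, hs⟩ hbdd)
  obtain ⟨hI, hge⟩ := hmem
  refine le_antisymm ?_ hge
  by_contra! hlt
  have hcont : ContinuousOn g (Icc 0 (sInf H)) := hg.mono (Icc_subset_Icc le_rfl hI.2)
  obtain ⟨x, hx, hxe⟩ := intermediate_value_Icc hI.1 hcont
    (show (a + g (sInf H)) / 2 ∈ Icc (g 0) (g (sInf H)) by constructor <;> linarith)
  have hxH : x ∈ H := hH' ⟨⟨hx.1, hx.2.trans hI.2⟩, by show a < g x; rw [hxe]; linarith⟩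
  have : sInf H = x := le_antisymm (csInf_le hbdd hxH) hx.2
  rw [← this] at hxe
  linarith

lemma aux_miss (T a t : ℝ) (htT : t ≤ T) (H : Set ℝ) (h : ∀ s ∈ H, t ≤ s) :
    t ≤ sInf (H ∪ {T}) := by
  apply le_csInf ⟨T, Or.inr rfl⟩
  rintro x (hx | hx)
  · exact h x hx
  · rw [hx]; exact htT

/-- grid -/
noncomputable def gr (t : ℝ) (n k : ℕ) : ℝ := t * k / (n + 1)

lemma gr_mem {t : ℝ} (ht : 0 ≤ t) {n k : ℕ} (hk : k ≤ n + 1) : gr t n k ∈ Icc 0 t := by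
  unfold gr
  have : (k:ℝ) ≤ n + 1 := by exact_mod_cast hk
  refine ⟨by positivity, ?_⟩
  rw [div_le_iff₀ (by positivity)]
  nlinarith

/-- first-hit event -/
def Dset {Ω : Type*} (M : ℝ → Ω → ℝ) (t b : ℝ) (n k : ℕ) : Set Ω :=
  {ω | b < M (gr t n k) ω ∧ ∀ j < k, M (gr t n j) ω ≤ b}

def Gset {Ω : Type*} (M : ℝ → Ω → ℝ) (t b ε : ℝ) (n k : ℕ) : Set Ω :=
  Dset M t b n k ∩ {ω | b + ε < M (gr t n k) ω}

def Aset {Ω : Type*} (M : ℝ → Ω → ℝ) (t b : ℝ) : Set Ω := {ω | ∃ s ∈ Icc 0 t, b < M s ω}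

lemma Dset_disj {Ω : Type*} (M : ℝ → Ω → ℝ) (t b : ℝ) (n : ℕ) :
    Pairwise (Function.onFun Disjoint (Dset M t b n)) := by
  intro i j hij
  refine Set.disjoint_left.2 fun ω hi hj => ?_
  rcases lt_or_gt_of_ne hij with h | h
  · exact absurd hi.1 (not_lt.2 (hj.2 i h))
  · exact absurd hj.1 (not_lt.2 (hi.2 j h))

lemma mem_iUnion_D {Ω : Type*} (M : ℝ → Ω → ℝ) (t b : ℝ) (n : ℕ) (ω : Ω) :
    ω ∈ (⋃ k ∈ Finset.range (n + 2), Dset M t b n k) ↔ ∃ k ≤ n + 1, b < M (gr t n k) ω := by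
  classical
  simp only [mem_iUnion, Finset.mem_range, exists_prop]
  constructor
  · rintro ⟨k, hk, h⟩; exact ⟨k, by omega, h.1⟩
  · rintro h
    obtain ⟨h1, h2⟩ := Nat.find_spec h
    refine ⟨Nat.find h, by omega, h2, fun j hj => ?_⟩
    have := Nat.find_min h hj
    push Not at this
    exact this (by omega)

open Filter Topology in
lemma ev_A {Ω : Type*} (M : ℝ → Ω → ℝ) (t b : ℝ) (ht : 0 < t) (ω : Ω)
    (hc : ContinuousOn (fun s => M s ω) (Icc 0 t)) :
    ∀ᶠ n in atTop, (ω ∈ (⋃ k ∈ Finset.range (n + 2), Dset M t b n k) ↔ ω ∈ Aset M t b) := by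
  simp_rw [mem_iUnion_D]
  by_cases h : ω ∈ Aset M t b
  · simp only [h, iff_true]
    obtain ⟨s, hs, hb⟩ := h
    have hu := Metric.continuousOn_iff.1 hc s hs (M s ω - b) (by linarith)
    obtain ⟨δ, hδ, hd⟩ := hu
    obtain ⟨N, hN⟩ := exists_nat_gt (t / δ)
    filter_upwards [eventually_ge_atTop N] with n hn
    have hnN : (N:ℝ) ≤ n := by exact_mod_cast hn
    have hn1 : (0:ℝ) < n + 1 := by positivity
    have hk0 : 0 ≤ s * (n + 1) / t := by have := hs.1; positivity
    have hk : s * (n + 1) / t ≤ n + 1 := by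
      rw [div_le_iff₀ ht]; nlinarith [hs.2]
    have hkn : ⌊s * (n + 1) / t⌋₊ ≤ n + 1 := by
      apply Nat.floor_le_of_le; push_cast; exact hk
    refine ⟨⌊s * (n + 1) / t⌋₊, hkn, ?_⟩
    have h1 := Nat.floor_le hk0
    have h2 := Nat.lt_floor_add_one (s * (n + 1) / t)
    have hg : dist (gr t n ⌊s * (n + 1) / t⌋₊) s < δ := by
      rw [le_div_iff₀ ht] at h1
      rw [div_lt_iff₀ ht] at h2
      rw [div_lt_iff₀ hδ] at hN
      unfold gr
      rw [Real.dist_eq, abs_lt]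
      constructor
      · rw [lt_sub_iff_add_lt, lt_div_iff₀ hn1]; nlinarith
      · rw [sub_lt_iff_lt_add, div_lt_iff₀ hn1]; nlinarith
    have := hd _ (gr_mem ht.le hkn) hg
    rw [Real.dist_eq, abs_lt] at this
    linarith [this.1]
  · simp only [h, iff_false]
    refine Eventually.of_forall fun n => ?_
    rintro ⟨k, hk, hb⟩
    exact h ⟨_, gr_mem ht.le hk, hb⟩

open Filter Topology in
lemma ev_G {Ω : Type*} (M : ℝ → Ω → ℝ) (t b ε : ℝ) (ht : 0 < t) (hε : 0 < ε) (ω : Ω)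
    (hc : ContinuousOn (fun s => M s ω) (Icc 0 t)) (h0 : M 0 ω ≤ b) :
    ∀ᶠ n in atTop, (ω ∈ (⋃ k ∈ Finset.range (n + 2), Gset M t b ε n k) ↔ ω ∈ (∅ : Set Ω)) := by
  have hu := isCompact_Icc.uniformContinuousOn_of_continuous hc
  obtain ⟨δ, hδ, hd⟩ := Metric.uniformContinuousOn_iff.1 hu ε hε
  obtain ⟨N, hN⟩ := exists_nat_gt (t / δ)
  filter_upwards [eventually_ge_atTop N] with n hn
  have hnN : (N:ℝ) ≤ n := by exact_mod_cast hn
  have hn1 : (0:ℝ) < n + 1 := by positivity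
  simp only [mem_iUnion, Finset.mem_range, exists_prop, mem_empty_iff_false, iff_false]
  rintro ⟨k, hk, ⟨hD, hD'⟩, hG⟩
  simp only [mem_setOf_eq] at hG
  rcases k with _ | k
  · have : gr t n 0 = 0 := by simp [gr]
    rw [this] at hD; linarith
  · have h1 := hD' k (by omega)
    have hg : dist (gr t n (k+1)) (gr t n k) < δ := by
      have : gr t n (k+1) - gr t n k = t / (n+1) := by
        unfold gr; push_cast; field_simp; ring
      rw [Real.dist_eq, this, abs_of_pos (by positivity), div_lt_iff₀ hn1]
      rw [div_lt_iff₀ hδ] at hN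
      nlinarith
    have := hd _ (gr_mem ht.le (by omega)) _ (gr_mem ht.le (by omega)) hg
    rw [Real.dist_eq, abs_lt] at this
    linarith [this.2]

section
variable {Ω : Type*} {mΩ : MeasurableSpace Ω} {P : Measure Ω}
    [IsProbabilityMeasure P]
    (T : ℝ) (ℱ : Filtration ℝ mΩ)
    (M : ℝ → Ω → ℝ)
    (hadp : Adapted ℱ M)
    (hint : ∀ t ∈ Set.Icc (0 : ℝ) T, Integrable (M t) P)
    (hmart : ∀ s t : ℝ, 0 ≤ s → s ≤ t → t ≤ T → P[M t | ℱ s] =ᵐ[P] M s)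
    (hcont : ∀ ω, ContinuousOn (fun s => M s ω) (Set.Icc 0 T))

include hadp in
lemma meas_D (t b : ℝ) (ht : 0 ≤ t) (n k : ℕ) : MeasurableSet[ℱ (gr t n k)] (Dset M t b n k) := by
  have e : Dset M t b n k = {ω | b < M (gr t n k) ω} ∩ ⋂ j ∈ Finset.range k, {ω | M (gr t n j) ω ≤ b} := by
    ext ω; simp [Dset]
  rw [e]
  refine MeasurableSet.inter (measurableSet_lt measurable_const (hadp _)) ?_
  refine Finset.measurableSet_biInter _ fun j hj => ?_
  have hj' : (j:ℝ) ≤ k := by exact_mod_cast (Finset.mem_range.1 hj).le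
  have hle : gr t n j ≤ gr t n k := by unfold gr; gcongr
  exact ℱ.mono hle _ (measurableSet_le (hadp _) measurable_const)

include hadp in
lemma meas_G (t b ε : ℝ) (ht : 0 ≤ t) (n k : ℕ) :
    MeasurableSet[ℱ (gr t n k)] (Gset M t b ε n k) :=
  (meas_D ℱ M hadp t b ht n k).inter (measurableSet_lt measurable_const (hadp _))

include hint hmart in
lemma int_swap (s t b : ℝ) (hs : 0 ≤ s) (hst : s ≤ t) (htT : t ≤ T) (D : Set Ω)
    (hD : MeasurableSet[ℱ s] D) : ∫ ω in D, (M t ω - b) ∂P = ∫ ω in D, (M s ω - b) ∂P := by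
  have it := hint t ⟨hs.trans hst, htT⟩
  have is := hint s ⟨hs, hst.trans htT⟩
  rw [integral_sub it.integrableOn (integrable_const b).integrableOn,
    integral_sub is.integrableOn (integrable_const b).integrableOn,
    ← setIntegral_condExp (ℱ.le s) it hD]
  congr 1
  exact integral_congr_ae (ae_restrict_of_ae (hmart s t hs hst htT))

include hadp hint hmart in
lemma disc_sum (t b c : ℝ) (ht : 0 ≤ t) (htT : t ≤ T) (n : ℕ) (E : ℕ → Set Ω)
    (hE : ∀ k, MeasurableSet[ℱ (gr t n k)] (E k)) (hED : ∀ k, E k ⊆ Dset M t b n k) :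
    ∫ ω in ⋃ k ∈ Finset.range (n + 2), E k, (M t ω - c) ∂P =
      ∑ k ∈ Finset.range (n + 2), ∫ ω in E k, (M (gr t n k) ω - c) ∂P := by
  rw [integral_biUnion_finset _ (fun k _ => ℱ.le _ _ (hE k))]
  · refine Finset.sum_congr rfl fun k hk => ?_
    have := gr_mem ht (n := n) (k := k) (by have := Finset.mem_range.1 hk; omega)
    exact int_swap T ℱ M hint hmart _ _ _ this.1 this.2 htT _ (hE k)
  · intro i _ j _ hij
    exact (Dset_disj M t b n hij).mono (hED i) (hED j)
  · intro k _
    exact ((hint t ⟨ht, htT⟩).sub (integrable_const c)).integrableOn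

include hadp in
lemma meas_UD (t b : ℝ) (ht : 0 ≤ t) (n : ℕ) :
    MeasurableSet (⋃ k ∈ Finset.range (n + 2), Dset M t b n k) :=
  Finset.measurableSet_biUnion _ fun k _ => ℱ.le _ _ (meas_D ℱ M hadp t b ht n k)

include hadp in
lemma meas_UG (t b ε : ℝ) (ht : 0 ≤ t) (n : ℕ) :
    MeasurableSet (⋃ k ∈ Finset.range (n + 2), Gset M t b ε n k) :=
  Finset.measurableSet_biUnion _ fun k _ => ℱ.le _ _ (meas_G ℱ M hadp t b ε ht n k)

include hadp hcont in
open Filter Topology in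
lemma meas_A (t b : ℝ) (ht : 0 < t) (htT : t ≤ T) : MeasurableSet (Aset M t b) := by
  refine measurableSet_of_tendsto_indicator (L := (atTop : Filter ℕ))
    (As := fun n => ⋃ k ∈ Finset.range (n + 2), Dset M t b n k)
    (fun n => meas_UD ℱ M hadp t b ht.le n) ?_
  intro ω
  exact ev_A M t b ht ω ((hcont ω).mono (Icc_subset_Icc le_rfl htT))

include hadp hint hmart hcont in
open Filter Topology in
lemma lim_A (t b : ℝ) (ht : 0 < t) (htT : t ≤ T) :
    Tendsto (fun n : ℕ => ∫ ω in ⋃ k ∈ Finset.range (n + 2), Dset M t b n k, (M t ω - b) ∂P)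
      atTop (𝓝 (∫ ω in Aset M t b, (M t ω - b) ∂P)) :=
  aux_tendsto _ ((hint t ⟨ht.le, htT⟩).sub (integrable_const b)) _ _
    (fun n => meas_UD ℱ M hadp t b ht.le n) (meas_A T ℱ M hadp hcont t b ht htT)
    (Eventually.of_forall fun ω =>
      ev_A M t b ht ω ((hcont ω).mono (Icc_subset_Icc le_rfl htT)))

include hadp hint hmart hcont in
open Filter Topology in
lemma lower_A (t b : ℝ) (ht : 0 < t) (htT : t ≤ T) :
    0 ≤ ∫ ω in Aset M t b, (M t ω - b) ∂P := by
  refine ge_of_tendsto' (lim_A T ℱ M hadp hint hmart hcont t b ht htT) fun n => ?_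
  rw [disc_sum T ℱ M hadp hint hmart t b b ht.le htT n _
    (fun k => meas_D ℱ M hadp t b ht.le n k) (fun k => subset_rfl)]
  refine Finset.sum_nonneg fun k _ => ?_
  refine setIntegral_nonneg (ℱ.le _ _ (meas_D ℱ M hadp t b ht.le n k)) fun ω hω => ?_
  have := hω.1
  linarith

include hadp hint hmart hcont in
open Filter Topology in
lemma upper_A (t b : ℝ) (ht : 0 < t) (htT : t ≤ T) (h0 : ∀ᵐ ω ∂P, M 0 ω ≤ b) :
    ∫ ω in Aset M t b, (M t ω - b) ∂P ≤ 0 := by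
  refine le_of_forall_pos_le_add fun ε hε => ?_
  have hG : Tendsto (fun n : ℕ => ε + ∫ ω in ⋃ k ∈ Finset.range (n + 2), Gset M t b ε n k,
      (M t ω - b) ∂P) atTop (𝓝 (ε + ∫ ω in (∅ : Set Ω), (M t ω - b) ∂P)) := by
    refine tendsto_const_nhds.add (aux_tendsto _ ((hint t ⟨ht.le, htT⟩).sub (integrable_const b))
      _ _ (fun n => meas_UG ℱ M hadp t b ε ht.le n) MeasurableSet.empty ?_)
    filter_upwards [h0] with ω hω
    exact ev_G M t b ε ht hε ω ((hcont ω).mono (Icc_subset_Icc le_rfl htT)) hω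
  have hA := lim_A T ℱ M hadp hint hmart hcont t b ht htT
  have key := le_of_tendsto_of_tendsto' hA hG fun n => ?_
  · simp only [Measure.restrict_empty, integral_zero_measure] at key
    linarith
  rw [disc_sum T ℱ M hadp hint hmart t b b ht.le htT n _
      (fun k => meas_D ℱ M hadp t b ht.le n k) (fun k => subset_rfl),
    disc_sum T ℱ M hadp hint hmart t b b ht.le htT n _
      (fun k => meas_G ℱ M hadp t b ε ht.le n k) (fun k => inter_subset_left)]
  have mD := fun k => ℱ.le _ _ (meas_D ℱ M hadp t b ht.le n k)
  have mG := fun k => ℱ.le _ _ (meas_G ℱ M hadp t b ε ht.le n k)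
  have hs : ∑ k ∈ Finset.range (n + 2), ∫ ω in Dset M t b n k, ε ∂P ≤ ε := by
    rw [← integral_biUnion_finset _ (fun k _ => mD k)
      (fun i _ j _ hij => Dset_disj M t b n hij)
      (fun k _ => (integrable_const ε).integrableOn)]
    rw [setIntegral_const, smul_eq_mul]
    have : P.real (⋃ k ∈ Finset.range (n + 2), Dset M t b n k) ≤ 1 := measureReal_le_one
    nlinarith
  refine le_trans ?_ (add_le_add_left hs _)
  rw [← Finset.sum_add_distrib]
  refine Finset.sum_le_sum fun k hk => ?_
  have hkm := gr_mem ht.le (n := n) (k := k) (by have := Finset.mem_range.1 hk; omega)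
  have ik : Integrable (fun ω => M (gr t n k) ω - b) P :=
    (hint _ ⟨hkm.1, hkm.2.trans htT⟩).sub (integrable_const b)
  rw [← integral_indicator (mD k), ← integral_indicator (mD k), ← integral_indicator (mG k),
    ← integral_add ((integrable_const ε).indicator (mD k)) (ik.indicator (mG k))]
  refine integral_mono (ik.indicator (mD k))
    (((integrable_const ε).indicator (mD k)).add (ik.indicator (mG k))) fun ω => ?_
  simp only [Pi.add_apply]
  by_cases hd : ω ∈ Dset M t b n k
  · rw [indicator_of_mem hd, indicator_of_mem hd]
    by_cases hg : ω ∈ Gset M t b ε n k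
    · rw [indicator_of_mem hg]; linarith
    · rw [indicator_of_notMem hg]
      have : ¬ (b + ε < M (gr t n k) ω) := fun h => hg ⟨hd, h⟩
      linarith
  · rw [indicator_of_notMem hd, indicator_of_notMem hd,
      indicator_of_notMem (fun h => hd h.1)]
    simp

def Bset {Ω : Type*} (M : ℝ → Ω → ℝ) (t b : ℝ) : Set Ω := {ω | ∃ s ∈ Icc 0 t, b ≤ M s ω}

omit [IsProbabilityMeasure P] in
include hcont in
open Filter Topology in
lemma ev_B (t a : ℝ) (ht : 0 < t) (htT : t ≤ T) (ω : Ω) :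
    ∀ᶠ n : ℕ in atTop, (ω ∈ Aset M t (a - 1 / ((n:ℝ) + 1)) ↔ ω ∈ Bset M t a) := by
  by_cases h : ω ∈ Bset M t a
  · simp only [h, iff_true]
    obtain ⟨s, hs, hb⟩ := h
    refine Eventually.of_forall fun n => ⟨s, hs, ?_⟩
    have : 0 < 1 / ((n:ℝ) + 1) := by positivity
    linarith
  · simp only [h, iff_false]
    obtain ⟨x, hx, hmax⟩ := isCompact_Icc.exists_isMaxOn (nonempty_Icc.2 ht.le)
      ((hcont ω).mono (Icc_subset_Icc le_rfl htT))
    have hxa : M x ω < a := by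
      by_contra! h'; exact h ⟨x, hx, h'⟩
    have := (tendsto_one_div_add_atTop_nhds_zero_nat (𝕜 := ℝ)).eventually
      (gt_mem_nhds (show 0 < a - M x ω by linarith))
    filter_upwards [this] with n hn
    rintro ⟨s, hs, hb⟩
    have := hmax hs
    simp only [mem_setOf_eq] at this
    linarith

include hadp hcont in
open Filter Topology in
lemma meas_B (t b : ℝ) (ht : 0 < t) (htT : t ≤ T) : MeasurableSet (Bset M t b) :=
  measurableSet_of_tendsto_indicator (L := (atTop : Filter ℕ))
    (fun n => meas_A T ℱ M hadp hcont t (b - 1 / ((n:ℝ) + 1)) ht htT)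
    (fun ω => ev_B T M hcont t b ht htT ω)

include hadp hint hmart hcont in
open Filter Topology in
lemma lower_B (t a : ℝ) (ht : 0 < t) (htT : t ≤ T) :
    0 ≤ ∫ ω in Bset M t a, (M t ω - a) ∂P := by
  have ia : Integrable (fun ω => M t ω - a) P :=
    (hint t ⟨ht.le, htT⟩).sub (integrable_const (μ := P) a)
  have h1 := aux_tendsto _ ia _ _
    (fun n : ℕ => meas_A T ℱ M hadp hcont t (a - 1 / ((n:ℝ) + 1)) ht htT)
    (meas_B T ℱ M hadp hcont t a ht htT)
    (Eventually.of_forall fun ω => ev_B T M hcont t a ht htT ω)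
  have h2 := (tendsto_one_div_add_atTop_nhds_zero_nat (𝕜 := ℝ)).neg
  rw [neg_zero] at h2
  refine le_of_tendsto_of_tendsto' h2 h1 fun n => ?_
  have h3 := lower_A T ℱ M hadp hint hmart hcont t (a - 1 / ((n:ℝ) + 1)) ht htT
  have h4 : ∫ ω in Aset M t (a - 1 / ((n:ℝ) + 1)), (M t ω - (a - 1 / ((n:ℝ) + 1))) ∂P
      = ∫ ω in Aset M t (a - 1 / ((n:ℝ) + 1)), (M t ω - a) ∂P
        + ∫ ω in Aset M t (a - 1 / ((n:ℝ) + 1)), (1 / ((n:ℝ) + 1)) ∂P := by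
    rw [← integral_add ia.integrableOn (integrable_const _).integrableOn]
    congr 1; ext ω; ring
  rw [setIntegral_const, smul_eq_mul] at h4
  have h5 : P.real (Aset M t (a - 1 / ((n:ℝ) + 1))) ≤ 1 := measureReal_le_one
  have h6 : 0 < 1 / ((n:ℝ) + 1) := by positivity
  nlinarith

include hadp hint hmart hcont in
lemma final_ae (t a : ℝ) (ht : 0 < t) (htT : t ≤ T) (h0 : ∀ᵐ ω ∂P, M 0 ω ≤ a) :
    ∀ᵐ ω ∂P, ω ∈ Bset M t a → ω ∉ Aset M t a → M t ω = a := by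
  have ia : Integrable (fun ω => M t ω - a) P :=
    (hint t ⟨ht.le, htT⟩).sub (integrable_const (μ := P) a)
  have hl := lower_B T ℱ M hadp hint hmart hcont t a ht htT
  have hu := upper_A T ℱ M hadp hint hmart hcont t a ht htT h0
  have mA := meas_A T ℱ M hadp hcont t a ht htT
  have mB := meas_B T ℱ M hadp hcont t a ht htT
  have hsub : Aset M t a ⊆ Bset M t a := fun ω ⟨s, hs, h⟩ => ⟨s, hs, h.le⟩
  have hd := integral_diff mA ia.integrableOn hsub
  have hnn : ∀ ω ∈ Bset M t a \ Aset M t a, 0 ≤ a - M t ω := by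
    intro ω hω
    by_contra! h
    exact hω.2 ⟨t, ⟨ht.le, le_rfl⟩, by linarith⟩
  have mD := mB.diff mA
  have hpos : 0 ≤ ∫ ω in Bset M t a \ Aset M t a, (a - M t ω) ∂P := setIntegral_nonneg mD hnn
  have hneg : ∫ ω in Bset M t a \ Aset M t a, (a - M t ω) ∂P =
      - ∫ ω in Bset M t a \ Aset M t a, (M t ω - a) ∂P := by
    rw [← integral_neg]; congr 1; ext ω; ring
  have hz : ∫ ω in Bset M t a \ Aset M t a, (a - M t ω) ∂P = 0 := by linarith
  have ia' : Integrable (fun ω => a - M t ω) P :=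
    (integrable_const (μ := P) a).sub (hint t ⟨ht.le, htT⟩)
  rw [setIntegral_eq_zero_iff_of_nonneg_ae (ae_restrict_of_forall_mem mD hnn) ia'.integrableOn,
    Filter.EventuallyEq, ae_restrict_iff' mD] at hz
  filter_upwards [hz] with ω hω hB hA
  have := hω ⟨hB, hA⟩
  simp only [Pi.zero_apply] at this
  linarith

end

/-- For a continuous-path martingale `(M_t)_{t ∈ [0,T]}` with `M_0 = m` a.s. and `a > m`,
the processes stopped at the pathwise hitting times
`τ̲_a = inf{t ∈ [0,T] : M_t ≥ a} ∧ T` and `τ̄_a = inf{t ∈ [0,T] : M_t > a} ∧ T`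
coincide: for every `t ∈ [0,T]`, `M_{t ∧ τ̲_a} = M_{t ∧ τ̄_a}` almost surely. -/
theorem stmt_13 {Ω : Type*} {mΩ : MeasurableSpace Ω} {P : Measure Ω}
    [IsProbabilityMeasure P]
    (T : ℝ) (hT : 0 < T) (ℱ : Filtration ℝ mΩ)
    (M : ℝ → Ω → ℝ)
    (hadp : Adapted ℱ M)
    (hint : ∀ t ∈ Set.Icc (0 : ℝ) T, Integrable (M t) P)
    (hmart : ∀ s t : ℝ, 0 ≤ s → s ≤ t → t ≤ T → P[M t | ℱ s] =ᵐ[P] M s)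
    (hcont : ∀ ω, ContinuousOn (fun s => M s ω) (Set.Icc 0 T))
    (m : ℝ) (hM0 : ∀ᵐ ω ∂P, M 0 ω = m)
    (a : ℝ) (ha : m < a)
    (τlow τup : Ω → ℝ)
    (hτlow : ∀ ω, τlow ω = sInf ({s ∈ Set.Icc (0 : ℝ) T | a ≤ M s ω} ∪ {T}))
    (hτup : ∀ ω, τup ω = sInf ({s ∈ Set.Icc (0 : ℝ) T | a < M s ω} ∪ {T})) :
    ∀ t ∈ Set.Icc (0 : ℝ) T,
      ∀ᵐ ω ∂P, M (min t (τlow ω)) ω = M (min t (τup ω)) ω := by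
  intro t ht
  rcases ht.1.eq_or_lt with h0 | h0
  · subst h0
    refine Filter.Eventually.of_forall fun ω => ?_
    have h1 : 0 ≤ τlow ω := by
      rw [hτlow]; exact aux_miss T a 0 hT.le _ fun s hs => hs.1.1
    have h2 : 0 ≤ τup ω := by
      rw [hτup]; exact aux_miss T a 0 hT.le _ fun s hs => hs.1.1
    rw [min_eq_left h1, min_eq_left h2]
  · have hf := final_ae T ℱ M hadp hint hmart hcont t a h0 ht.2
      (hM0.mono fun ω h => by rw [h]; exact ha.le)
    filter_upwards [hf, hM0] with ω hω hm
    have hma : M 0 ω < a := by rw [hm]; exact ha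
    have lowB : ω ∈ Bset M t a → M (min t (τlow ω)) ω = a := by
      rintro ⟨s, hs, hb⟩
      obtain ⟨e1, e2⟩ := aux_hit T a (fun s => M s ω) (hcont ω) hma
        {s ∈ Set.Icc (0 : ℝ) T | a ≤ M s ω} subset_rfl (fun x hx => ⟨hx.1, hx.2.le⟩) s
        ⟨⟨hs.1, hs.2.trans ht.2⟩, hb⟩
      rw [← hτlow] at e1 e2
      rw [min_eq_right (e2.trans hs.2)]
      exact e1
    by_cases hA : ω ∈ Aset M t a
    · obtain ⟨s, hs, hb⟩ := hA
      rw [lowB ⟨s, hs, hb.le⟩]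
      obtain ⟨e1, e2⟩ := aux_hit T a (fun s => M s ω) (hcont ω) hma
        {s ∈ Set.Icc (0 : ℝ) T | a < M s ω} (fun x hx => ⟨hx.1, hx.2.le⟩) subset_rfl s
        ⟨⟨hs.1, hs.2.trans ht.2⟩, hb⟩
      rw [← hτup] at e1 e2
      rw [min_eq_right (e2.trans hs.2)]
      exact e1.symm
    · have hup : t ≤ τup ω := by
        rw [hτup]
        refine aux_miss T a t ht.2 _ fun s hs => ?_
        by_contra! h
        exact hA ⟨s, ⟨hs.1.1, h.le⟩, hs.2⟩
      rw [min_eq_left hup]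
      by_cases hB : ω ∈ Bset M t a
      · rw [lowB hB, hω hB hA]
      · have hlow : t ≤ τlow ω := by
          rw [hτlow]
          refine aux_miss T a t ht.2 _ fun s hs => ?_
          by_contra! h
          exact hB ⟨s, ⟨hs.1.1, h.le⟩, hs.2⟩
        rw [min_eq_left hlow]
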